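/- Let f : ℝ^n → ℝ be continuous and ℤ^n-periodic (f(x+m) = f(x) for all x ∈ ℝ^n and m ∈ ℤ^n), and let g : ℝ^n → ℝ be continuous with compact support. Then lim_{ε → 0⁺} ∫_{ℝ^n} g(x) · f(x/ε) dx = (∫_{[0,1]^n} f(y) dy) · (∫_{ℝ^n} g(x) dx). -/

import Mathlib

open MeasureTheory

/-- The closed unit cube `[0,1]ⁿ` in Euclidean space. -/
def unitCube (n : ℕ) : Set (EuclideanSpace ℝ (Fin n)) :=
  {y | ∀ i, y i ∈ Set.Icc (0 : ℝ) 1}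

/-!
Let `A ε = ∫ g(x) f(x/ε) dx`. Replacing `f(x/ε)` by `f(y + x/ε)` amounts to translating `g` by
`ε y`, which by `L¹`-continuity of translations costs `o(1)` as `ε → 0`. Hence `A ε` may be averaged
over `y` in a period cell, and by Fubini and periodicity this average is exactly `∫ g` times the
mean of `f`, for every `ε ≠ 0`.
-/

open Filter Topology
open scoped ENNReal Pointwise

section General

variable {X Y F : Type*} [MeasurableSpace X] [MeasurableSpace Y] [NormedAddCommGroup F]
  {μ : Measure X}

lemma memLp_top_comp_quasiMeasurePreserving {ν : Measure Y} {f : Y → F} {φ : X → Y}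
    (hf : MemLp f ∞ ν) (hφ : Measure.QuasiMeasurePreserving φ μ ν) :
    MemLp (fun x => f (φ x)) ∞ μ :=
  memLp_top_of_bound (hf.1.comp_quasiMeasurePreserving hφ) (lpNorm f ∞ ν)
    (hφ.ae (ae_le_lpNorm_exponent_top hf))

lemma isAddFundamentalDomain_congr {G : Type*} [AddGroup G] [Countable G] [AddAction G X]
    [MeasurableConstVAdd G X] [VAddInvariantMeasure G X μ] {s t : Set X}
    (hs : IsAddFundamentalDomain G s μ) (hst : s =ᵐ[μ] t) : IsAddFundamentalDomain G t μ where
  nullMeasurableSet := hs.nullMeasurableSet.congr hst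
  ae_covers := by
    have h_mem : ∀ᵐ x ∂μ, ∀ γ : G, (γ +ᵥ x) ∈ s ↔ (γ +ᵥ x) ∈ t := ae_all_iff.2 fun γ =>
      (measurePreserving_vadd γ μ).quasiMeasurePreserving.ae hst.mem_iff
    filter_upwards [hs.ae_covers, h_mem] with x ⟨γ, hγ⟩ hx
    exact ⟨γ, (hx γ).1 hγ⟩
  aedisjoint γ δ hγδ :=
    (hs.aedisjoint hγδ).congr ((vadd_set_ae_eq γ).2 hst.symm) ((vadd_set_ae_eq δ).2 hst.symm)

end General

section Translation

variable {G E : Type*} [AddGroup G] [MeasurableSpace G] [NormedAddCommGroup E] {μ : Measure G}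
  [μ.IsAddLeftInvariant] {g : G → E}

lemma integral_norm_translate_sub_le [MeasurableAdd G] (hg : Integrable g μ) (z : G) :
    ∫ x, ‖g (z + x) - g x‖ ∂μ ≤ 2 * ∫ x, ‖g x‖ ∂μ := by
  have hgz : Integrable (fun x => g (z + x)) μ := hg.comp_add_left z
  calc ∫ x, ‖g (z + x) - g x‖ ∂μ
      ≤ ∫ x, (‖g (z + x)‖ + ‖g x‖) ∂μ :=
        integral_mono (hgz.sub hg).norm (hgz.norm.add hg.norm) fun _ => norm_sub_le _ _
    _ = 2 * ∫ x, ‖g x‖ ∂μ := by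
        rw [integral_add hgz.norm hg.norm, integral_add_left_eq_self (fun x => ‖g x‖), two_mul]

lemma continuous_integral_norm_translate_sub [TopologicalSpace G] [IsTopologicalAddGroup G]
    [BorelSpace G] [IsLocallyFiniteMeasure μ] [μ.InnerRegularCompactLTTop] (hg : Integrable g μ) :
    Continuous fun z => ∫ x, ‖g (z + x) - g x‖ ∂μ := by
  have hLp : MemLp g 1 μ := memLp_one_iff_integrable.2 hg
  have h_norm (z : G) :
      ∫ x, ‖g (z + x) - g x‖ ∂μ = ‖(DomAddAct.mk z +ᵥ hLp.toLp g) - hLp.toLp g‖ := by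
    rw [DomAddAct.mk_vadd_toLp, ← MemLp.toLp_sub, L1.norm_eq_integral_norm]
    refine integral_congr_ae ?_
    filter_upwards [MemLp.coeFn_toLp ((hLp.comp_measurePreserving
      (measurePreserving_vadd z μ)).sub hLp)] with x hx
    exact congrArg norm hx.symm
  have : Fact ((1 : ℝ≥0∞) ≠ ∞) := ⟨ENNReal.one_ne_top⟩
  simp only [h_norm]
  exact ((DomAddAct.continuous_mk.vadd continuous_const).sub continuous_const).norm

end Translation

lemma setIntegral_add_right_of_periodic {V F : Type*} [AddCommGroup V] [MeasurableSpace V]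
    [MeasurableAdd V] [NormedAddCommGroup F] [NormedSpace ℝ F] {μ : Measure V}
    [μ.IsAddLeftInvariant] {L : AddSubgroup V} [Countable L] {D : Set V}
    (hD : IsAddFundamentalDomain L D μ) {f : V → F} (hper : ∀ v ∈ L, Function.Periodic f v)
    (a : V) : ∫ y in D, f (y + a) ∂μ = ∫ y in D, f y ∂μ := by
  have h_inv (v : L) (x : V) : f (v +ᵥ x) = f x := by
    rw [AddSubgroup.vadd_def, vadd_eq_add, add_comm, hper v v.2 x]
  calc ∫ y in D, f (y + a) ∂μ = ∫ y in D, f (a +ᵥ y) ∂μ := by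
        simp only [vadd_eq_add, add_comm]
    _ = ∫ y in a +ᵥ D, f y ∂μ :=
        ((measurePreserving_vadd a μ).setIntegral_image_emb
          (measurableEmbedding_const_vadd a) f D).symm
    _ = ∫ y in D, f y ∂μ := (hD.vadd_of_comm a).setIntegral_eq hD h_inv

lemma memLp_top_of_continuous_of_periodic {V F : Type*} [NormedAddCommGroup V] [NormedSpace ℝ V]
    [FiniteDimensional ℝ V] [MeasurableSpace V] [BorelSpace V] [NormedAddCommGroup F]
    (L : Submodule ℤ V) [DiscreteTopology L] [IsZLattice ℝ L] {f : V → F} (hf : Continuous f)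
    (hper : ∀ v ∈ L, Function.Periodic f v) (μ : Measure V) : MemLp f ∞ μ := by
  obtain ⟨C, hC⟩ := (IsZLattice.isCompact_range_of_periodic L f hf
    fun x v hv => hper v hv x).isBounded.exists_norm_le
  exact memLp_top_of_bound hf.aestronglyMeasurable C (.of_forall fun x => hC (f x) ⟨x, rfl⟩)

section Averaging

variable {V 𝕜 F : Type*} [NormedAddCommGroup V] [NormedSpace ℝ V] [FiniteDimensional ℝ V]
  [MeasurableSpace V] [BorelSpace V] {μ : Measure V} [μ.IsAddHaarMeasure] [NormedAddCommGroup F]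

lemma integrable_integral_norm_smul_translate_sub {g : V → F} (hg : Integrable g μ) (ν : Measure V)
    [IsFiniteMeasure ν] (ε : ℝ) : Integrable (fun y => ∫ x, ‖g (ε • y + x) - g x‖ ∂μ) ν := by
  refine .of_bound ((continuous_integral_norm_translate_sub hg).comp
    (continuous_const_smul ε)).aestronglyMeasurable (2 * ∫ x, ‖g x‖ ∂μ) (.of_forall fun y => ?_)
  rw [Real.norm_of_nonneg (integral_nonneg fun _ => norm_nonneg _)]
  exact integral_norm_translate_sub_le hg (ε • y)

lemma tendsto_integral_integral_norm_translate_sub {g : V → F} (hg : Integrable g μ) (ν : Measure V)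
    [IsFiniteMeasure ν] :
    Tendsto (fun ε : ℝ => ∫ y, ∫ x, ‖g (ε • y + x) - g x‖ ∂μ ∂ν) (𝓝 0) (𝓝 0) := by
  have h_cont := continuous_integral_norm_translate_sub hg
  have h_ptwise (y : V) :
      Tendsto (fun ε : ℝ => ∫ x, ‖g (ε • y + x) - g x‖ ∂μ) (𝓝 0) (𝓝 0) := by
    have h_smul : Continuous fun ε : ℝ => ε • y := by fun_prop
    simpa [Function.comp_def] using (h_cont.comp h_smul).tendsto 0
  suffices h : Tendsto (fun ε : ℝ => ∫ y, ∫ x, ‖g (ε • y + x) - g x‖ ∂μ ∂ν) (𝓝 0)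
      (𝓝 (∫ _, 0 ∂ν)) by
    simpa only [integral_zero] using h
  refine tendsto_integral_filter_of_dominated_convergence (fun _ => 2 * ∫ x, ‖g x‖ ∂μ)
    (.of_forall fun ε => (integrable_integral_norm_smul_translate_sub hg ν ε).1)
    (.of_forall fun ε => .of_forall fun y => ?_) (integrable_const _) (.of_forall h_ptwise)
  rw [Real.norm_of_nonneg (integral_nonneg fun _ => norm_nonneg _)]
  exact integral_norm_translate_sub_le hg (ε • y)

variable [RCLike 𝕜] [NormedSpace 𝕜 F] {g : V → 𝕜} {f : V → F}

lemma quasiMeasurePreserving_const_add_smul (y : V) {c : ℝ} (hc : c ≠ 0) :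
    Measure.QuasiMeasurePreserving (fun x => y + c • x) μ μ :=
  (measurePreserving_add_left μ y).quasiMeasurePreserving.comp
    (Measure.quasiMeasurePreserving_smul μ hc)

lemma integrable_prod_smul_comp_add_smul (hg : Integrable g μ) (hf : MemLp f ∞ μ) (ν : Measure V)
    [IsFiniteMeasure ν] {c : ℝ} (hc : c ≠ 0) :
    Integrable (fun p : V × V => g p.2 • f (p.1 + c • p.2)) (ν.prod μ) :=
  have h_qmp : Measure.QuasiMeasurePreserving (fun p : V × V => p.1 + c • p.2) (ν.prod μ) μ :=
    QuasiMeasurePreserving.prod_of_right (by fun_prop)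
      (.of_forall fun y => quasiMeasurePreserving_const_add_smul y hc)
  (hg.comp_snd ν).smul_of_top_left (memLp_top_comp_quasiMeasurePreserving hf h_qmp)

variable [NormedSpace ℝ F]

lemma norm_integral_smul_comp_sub_le (hg : Integrable g μ) (hf : MemLp f ∞ μ) {c : ℝ}
    (hc : c ≠ 0) (y : V) :
    ‖(∫ x, g x • f (c • x) ∂μ) - ∫ x, g x • f (y + c • x) ∂μ‖
      ≤ lpNorm f ∞ μ * ∫ x, ‖g (c⁻¹ • y + x) - g x‖ ∂μ := by
  have h_qmp := quasiMeasurePreserving_const_add_smul (μ := μ) y hc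
  have hfy : MemLp (fun x => f (y + c • x)) ∞ μ := memLp_top_comp_quasiMeasurePreserving hf h_qmp
  have hgy : Integrable (fun x => g (c⁻¹ • y + x)) μ := hg.comp_add_left (c⁻¹ • y)
  have h_translate : ∫ x, g x • f (c • x) ∂μ = ∫ x, g (c⁻¹ • y + x) • f (y + c • x) ∂μ := by
    rw [← integral_add_left_eq_self (fun x => g x • f (c • x)) (c⁻¹ • y)]
    simp only [smul_add, smul_inv_smul₀ hc]
  have h_sub : (∫ x, g x • f (c • x) ∂μ) - ∫ x, g x • f (y + c • x) ∂μ =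
      ∫ x, (g (c⁻¹ • y + x) - g x) • f (y + c • x) ∂μ := by
    simp only [sub_smul]
    rw [h_translate]
    exact (integral_sub (hgy.smul_of_top_left hfy) (hg.smul_of_top_left hfy)).symm
  rw [h_sub, ← integral_const_mul]
  refine norm_integral_le_of_norm_le ((hgy.sub hg).norm.const_mul _) ?_
  filter_upwards [h_qmp.ae (ae_le_lpNorm_exponent_top hf)] with x hx
  rw [norm_smul, mul_comm]
  gcongr

variable [CompleteSpace F]

lemma tendsto_integral_smul_sub_integral_integral (hg : Integrable g μ) (hf : MemLp f ∞ μ)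
    (ν : Measure V) [IsProbabilityMeasure ν] :
    Tendsto (fun ε : ℝ => (∫ x, g x • f (ε⁻¹ • x) ∂μ) -
      ∫ y, ∫ x, g x • f (y + ε⁻¹ • x) ∂μ ∂ν) (𝓝[≠] 0) (𝓝 0) := by
  have h_lim := (tendsto_integral_integral_norm_translate_sub hg ν).const_mul (lpNorm f ∞ μ)
  rw [mul_zero] at h_lim
  refine squeeze_zero_norm' ?_ (h_lim.mono_left nhdsWithin_le_nhds)
  filter_upwards [self_mem_nhdsWithin] with ε (hε : ε ≠ 0)
  have h_int := (integrable_prod_smul_comp_add_smul hg hf ν (inv_ne_zero hε)).integral_prod_left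
  have h_average : (∫ x, g x • f (ε⁻¹ • x) ∂μ) - ∫ y, ∫ x, g x • f (y + ε⁻¹ • x) ∂μ ∂ν =
      ∫ y, ((∫ x, g x • f (ε⁻¹ • x) ∂μ) - ∫ x, g x • f (y + ε⁻¹ • x) ∂μ) ∂ν := by
    rw [integral_sub (integrable_const _) h_int, integral_const, probReal_univ, one_smul]
  rw [h_average, ← integral_const_mul]
  refine norm_integral_le_of_norm_le
    ((integrable_integral_norm_smul_translate_sub hg ν ε).const_mul _) (.of_forall fun y => ?_)
  simpa only [inv_inv] using norm_integral_smul_comp_sub_le hg hf (inv_ne_zero hε) y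

variable {L : AddSubgroup V} [Countable L] {D : Set V}

lemma setAverage_integral_smul_comp_add_smul (hD : IsAddFundamentalDomain L D μ)
    (hD_fin : μ D ≠ ∞) (hg : Integrable g μ) (hf : MemLp f ∞ μ)
    (hper : ∀ v ∈ L, Function.Periodic f v) {c : ℝ} (hc : c ≠ 0) :
    ⨍ y in D, ∫ x, g x • f (y + c • x) ∂μ ∂μ = (∫ x, g x ∂μ) • ⨍ y in D, f y ∂μ := by
  have : IsFiniteMeasure (μ.restrict D) := ⟨by simpa using hD_fin.lt_top⟩
  have h_swap : ∫ y in D, ∫ x, g x • f (y + c • x) ∂μ ∂μ = (∫ x, g x ∂μ) • ∫ y in D, f y ∂μ := by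
    rw [integral_integral_swap (integrable_prod_smul_comp_add_smul hg hf (μ.restrict D) hc)]
    simp only [integral_smul, setIntegral_add_right_of_periodic hD hper, integral_smul_const]
  rw [setAverage_eq, setAverage_eq, h_swap, smul_comm]

theorem riemann_lebesgue_periodic_general (hD : IsAddFundamentalDomain L D μ)
    (hD_fin : μ D ≠ ∞) (hg : Integrable g μ) (hf : MemLp f ∞ μ)
    (hper : ∀ v ∈ L, Function.Periodic f v) :
    Tendsto (fun ε : ℝ => ∫ x, g x • f (ε⁻¹ • x) ∂μ) (𝓝[≠] 0)
      (𝓝 ((∫ x, g x ∂μ) • ⨍ y in D, f y ∂μ)) := by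
  have hD_ne : μ D ≠ 0 := hD.measure_ne_zero (NeZero.ne μ)
  have : IsProbabilityMeasure (ProbabilityTheory.cond μ D) :=
    ProbabilityTheory.cond_isProbabilityMeasure_of_finite hD_ne hD_fin
  have h_sub := tendsto_integral_smul_sub_integral_integral hg hf (ProbabilityTheory.cond μ D)
  rw [← tendsto_sub_nhds_zero_iff]
  refine h_sub.congr' ?_
  filter_upwards [self_mem_nhdsWithin] with ε (hε : ε ≠ 0)
  rw [← setAverage_integral_smul_comp_add_smul hD hD_fin hg hf hper (inv_ne_zero hε),
    setAverage_eq', ProbabilityTheory.cond]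

end Averaging

lemma unitCube_eq_parallelepiped (n : ℕ) :
    unitCube n = parallelepiped (EuclideanSpace.basisFun (Fin n) ℝ).toBasis := by
  ext y
  simp [unitCube, parallelepiped_basis_eq, -OrthonormalBasis.coe_toBasis]

lemma volume_unitCube (n : ℕ) : volume (unitCube n) = 1 := by
  rw [unitCube_eq_parallelepiped, OrthonormalBasis.coe_toBasis,
    OrthonormalBasis.volume_parallelepiped]

lemma setAverage_unitCube {n : ℕ} {F : Type*} [NormedAddCommGroup F] [NormedSpace ℝ F]
    (f : EuclideanSpace ℝ (Fin n) → F) : ⨍ y in unitCube n, f y = ∫ y in unitCube n, f y := by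
  rw [setAverage_eq, measureReal_def, volume_unitCube, ENNReal.toReal_one, inv_one, one_smul]

/-- The period lattice `ℤⁿ` in Euclidean space, encoded as the integer span of the standard basis so
that the `ZSpan` results supply its lattice structure and fundamental domain. -/
def integerLattice (n : ℕ) : Submodule ℤ (EuclideanSpace ℝ (Fin n)) :=
  .span ℤ (Set.range (EuclideanSpace.basisFun (Fin n) ℝ).toBasis)

instance (n : ℕ) : DiscreteTopology (integerLattice n) :=
  inferInstanceAs (DiscreteTopology (Submodule.span ℤ _))

instance (n : ℕ) : IsZLattice ℝ (integerLattice n) :=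
  inferInstanceAs (IsZLattice ℝ (Submodule.span ℤ _))

instance (n : ℕ) : Countable (integerLattice n).toAddSubgroup :=
  inferInstanceAs (Countable (integerLattice n))

lemma mem_integerLattice_iff {n : ℕ} {v : EuclideanSpace ℝ (Fin n)} :
    v ∈ integerLattice n ↔
      ∃ m : Fin n → ℤ, (EuclideanSpace.equiv (Fin n) ℝ).symm (fun i => (m i : ℝ)) = v := by
  simp only [integerLattice, Module.Basis.mem_span_iff_repr_mem]
  constructor
  · intro h
    choose m hm using h
    exact ⟨m, by ext i; simpa using hm i⟩
  · rintro ⟨m, rfl⟩ i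
    exact ⟨m i, by simp⟩

lemma isAddFundamentalDomain_unitCube (n : ℕ) :
    IsAddFundamentalDomain (integerLattice n).toAddSubgroup (unitCube n) := by
  rw [unitCube_eq_parallelepiped]
  exact isAddFundamentalDomain_congr (ZSpan.isAddFundamentalDomain' _ volume)
    (ZSpan.fundamentalDomain_ae_parallelepiped _ volume)

lemma periodic_of_mem_integerLattice {n : ℕ} {α : Type*} {f : EuclideanSpace ℝ (Fin n) → α}
    (hper : ∀ (x : EuclideanSpace ℝ (Fin n)) (m : Fin n → ℤ),
      f (x + (EuclideanSpace.equiv (Fin n) ℝ).symm (fun i => (m i : ℝ))) = f x) :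
    ∀ v ∈ integerLattice n, Function.Periodic f v := by
  intro v hv x
  obtain ⟨m, rfl⟩ := mem_integerLattice_iff.1 hv
  exact hper x m

/-- Riemann–Lebesgue lemma for periodic functions: if `f : ℝⁿ → ℝ` is continuous
and `ℤⁿ`-periodic and `g` is continuous with compact support, then
`∫ g(x) f(x/ε) dx → (∫_{[0,1]ⁿ} f) · (∫ g)` as `ε → 0⁺`. -/
theorem riemann_lebesgue_periodic {n : ℕ}
    (f : EuclideanSpace ℝ (Fin n) → ℝ) (hf : Continuous f)
    (hper : ∀ (x : EuclideanSpace ℝ (Fin n)) (m : Fin n → ℤ),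
      f (x + (EuclideanSpace.equiv (Fin n) ℝ).symm (fun i => (m i : ℝ))) = f x)
    (g : EuclideanSpace ℝ (Fin n) → ℝ) (hg : Continuous g)
    (hgsupp : HasCompactSupport g) :
    Filter.Tendsto (fun ε : ℝ => ∫ x, g x * f (ε⁻¹ • x))
      (nhdsWithin 0 (Set.Ioi 0))
      (nhds ((∫ y in unitCube n, f y) * ∫ x, g x)) := by
  have hper' := periodic_of_mem_integerLattice hper
  have h_lim := riemann_lebesgue_periodic_general (isAddFundamentalDomain_unitCube n)
    (by simp [volume_unitCube]) (hg.integrable_of_hasCompactSupport hgsupp)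
    (memLp_top_of_continuous_of_periodic (integerLattice n) hf hper' volume) hper'
  rw [setAverage_unitCube, smul_eq_mul, mul_comm] at h_lim
  exact h_lim.mono_left (nhdsWithin_mono 0 fun _ hε => ne_of_gt hε)
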